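/- For all integers d, k with 1 ≤ k < d, the growth constant of closed (d,k)-self-avoiding manifolds satisfies the lower bound limsup_{n→∞} (c^SAM_{(d,k),n}(0))^{1/n} ≥ ((k+1)(d−k))^{1/(2k)}. -/

import Mathlib

open Filter

/-- A `k`-face of the hypercubic lattice `ℤ^d`: an orientation set `S ⊆ {1,…,d}`
together with a base vertex `v ∈ ℤ^d`. -/
abbrev Face (d : ℕ) := Finset (Fin d) × (Fin d → ℤ)

/-- The boundary `(k-1)`-edges of a `k`-face `(S, v)`: the `(k-1)`-faces
`(S \ {i}, v)` and `(S \ {i}, v + e_i)` for `i ∈ S`. -/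
def faceEdges {d : ℕ} (f : Face d) : Finset (Face d) :=
  f.1.biUnion fun i =>
    {(f.1.erase i, f.2), (f.1.erase i, f.2 + Pi.single i 1)}

/-- Two faces are adjacent if they are distinct and share a common boundary edge. -/
def FaceAdj {d : ℕ} (f g : Face d) : Prop :=
  f ≠ g ∧ ∃ e, e ∈ faceEdges f ∧ e ∈ faceEdges g

/-- A set of faces is connected with respect to adjacency. -/
def ConnectedFaces {d : ℕ} (M : Finset (Face d)) : Prop :=
  ∀ f ∈ M, ∀ g ∈ M, Relation.ReflTransGen (fun a b => a ∈ M ∧ b ∈ M ∧ FaceAdj a b) f g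

/-- A `(d,k)`-self-avoiding manifold of `k`-area `n`: a connected set of `n` `k`-faces
such that every `(k-1)`-edge bounds at most two of its `k`-faces. -/
def IsSAM (d k n : ℕ) (M : Finset (Face d)) : Prop :=
  M.card = n ∧ (∀ f ∈ M, f.1.card = k) ∧ ConnectedFaces M ∧
    ∀ e : Face d, (M.filter fun f => e ∈ faceEdges f).card ≤ 2

/-- A closed `(d,k)`-self-avoiding manifold: every boundary edge of every face
is shared by exactly two faces. -/
def IsClosedSAM (d k n : ℕ) (M : Finset (Face d)) : Prop :=
  IsSAM d k n M ∧ ∀ f ∈ M, ∀ e ∈ faceEdges f,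
    (M.filter fun g => e ∈ faceEdges g).card = 2

/-- A `(d,k)`-fixed polyominoid of `k`-area `n`: a connected set of `n` `k`-faces. -/
def IsXD (d k n : ℕ) (M : Finset (Face d)) : Prop :=
  M.card = n ∧ (∀ f ∈ M, f.1.card = k) ∧ ConnectedFaces M

/-- Translation of a face by a lattice vector. -/
def translateFace {d : ℕ} (t : Fin d → ℤ) (f : Face d) : Face d := (f.1, f.2 + t)

/-- Two sets of faces are translation-equivalent. -/
def TransEquiv {d : ℕ} (A B : Finset (Face d)) : Prop :=
  ∃ t : Fin d → ℤ, A.image (translateFace t) = B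

/-- The number of `(d,k)`-self-avoiding manifolds of `k`-area `n`, up to translation. -/
noncomputable def samCount (d k n : ℕ) : ℕ :=
  Nat.card (Quot fun A B : {M : Finset (Face d) // IsSAM d k n M} =>
    TransEquiv A.val B.val)

/-- The number of closed `(d,k)`-self-avoiding manifolds of `k`-area `n`, up to
translation. -/
noncomputable def closedSamCount (d k n : ℕ) : ℕ :=
  Nat.card (Quot fun A B : {M : Finset (Face d) // IsClosedSAM d k n M} =>
    TransEquiv A.val B.val)

/-- The number of `(d,k)`-fixed polyominoids of `k`-area `n`, up to translation. -/
noncomputable def xdCount (d k n : ℕ) : ℕ :=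
  Nat.card (Quot fun A B : {M : Finset (Face d) // IsXD d k n M} =>
    TransEquiv A.val B.val)


namespace SamAux
open Finset

variable {d : ℕ}

theorem mem_fe {f e : Face d} : e ∈ faceEdges f ↔
    ∃ a ∈ f.1, ∃ α : ℤ, (α = 0 ∨ α = 1) ∧ e = (f.1.erase a, f.2 + Pi.single a α) := by
  unfold faceEdges
  simp only [mem_biUnion, mem_insert, mem_singleton]
  constructor
  · rintro ⟨a, ha, h | h⟩
    · exact ⟨a, ha, 0, Or.inl rfl, by simp [h]⟩
    · exact ⟨a, ha, 1, Or.inr rfl, h⟩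
  · rintro ⟨a, ha, α, h | h, h'⟩
    · subst h; exact ⟨a, ha, Or.inl (by simpa using h')⟩
    · subst h; exact ⟨a, ha, Or.inr h'⟩

theorem erase_inj' {T : Finset (Fin d)} {a b : Fin d} (ha : a ∈ T)
    (h : T.erase a = T.erase b) : a = b := by
  by_contra hne
  have : a ∈ T.erase b := mem_erase.2 ⟨hne, ha⟩
  rw [← h] at this
  simp at this

theorem card_fe (Q : Face d) : (faceEdges Q).card = 2 * Q.1.card := by
  unfold faceEdges
  rw [card_biUnion]
  · rw [sum_congr rfl (g := fun _ => 2)]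
    · simp [mul_comm]
    · intro a ha
      rw [card_pair]
      intro h
      have := congrFun (congrArg Prod.snd h) a
      simp at this
  · intro a ha b hb hab
    refine disjoint_left.2 ?_
    intro x hx hy
    simp only [mem_insert, mem_singleton] at hx hy
    apply hab
    apply erase_inj' ha
    rcases hx with h | h <;> rcases hy with h' | h' <;> rw [h] at h' <;> exact congrArg Prod.fst h'

/-- the number of faces of `M` around `e` -/
def cnt (M : Finset (Face d)) (e : Face d) : ℕ := (M.filter fun f => e ∈ faceEdges f).card

theorem cnt_cube (Q : Face d) (e : Face d) :
    cnt (faceEdges Q) e = 0 ∨ cnt (faceEdges Q) e = 2 := by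
  by_cases h : ∃ f ∈ faceEdges Q, e ∈ faceEdges f
  · right
    obtain ⟨f, hf, he⟩ := h
    obtain ⟨a, ha, α, hα, rfl⟩ := mem_fe.1 hf
    obtain ⟨b, hb, β, hβ, rfl⟩ := mem_fe.1 he
    simp only [mem_erase] at hb
    obtain ⟨hba, hb⟩ := hb
    unfold cnt
    rw [card_eq_two]
    refine ⟨(Q.1.erase a, Q.2 + Pi.single a α), (Q.1.erase b, Q.2 + Pi.single b β), ?_, ?_⟩
    · intro h
      exact hba (erase_inj' ha (congrArg Prod.fst h)).symm
    ext g
    simp only [mem_filter, mem_insert, mem_singleton]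
    constructor
    · rintro ⟨hg, heg⟩
      obtain ⟨c, hc, γ, hγ, rfl⟩ := mem_fe.1 hg
      obtain ⟨x, hx, δ, hδ, h⟩ := mem_fe.1 heg
      simp only [mem_erase] at hx
      obtain ⟨hxc, hx⟩ := hx
      have h1 : (Q.1.erase a).erase b = (Q.1.erase c).erase x := congrArg Prod.fst h
      have h2 := congrArg Prod.snd h
      simp only at h2
      have h3 := congrFun h2 c
      have hcab : c = a ∨ c = b := by
        by_contra hcon
        have : c ∈ (Q.1.erase a).erase b := by simp; tauto
        rw [h1] at this
        simp at this
      rcases hcab with rfl | rfl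
      · left
        simp [Pi.single_apply, hba.symm, hxc.symm] at h3
        rw [h3]
      · right
        simp [Pi.single_apply, hba, hxc.symm] at h3
        rw [h3]
    · rintro (rfl | rfl)
      · exact ⟨hf, he⟩
      · refine ⟨mem_fe.2 ⟨b, hb, β, hβ, rfl⟩, mem_fe.2 ⟨a, by simp [ha, hba.symm], α, hα, ?_⟩⟩
        simp only [erase_right_comm, Prod.mk.injEq, true_and]
        abel
  · left
    unfold cnt
    rw [card_eq_zero, filter_eq_empty_iff]
    intro f hf he
    exact h ⟨f, hf, he⟩

theorem edge_top {Q f e : Face d} {i : Fin d} (hf : f ∈ faceEdges Q)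
    (he : e ∈ faceEdges f) (h : Q.2 i + 1 ≤ e.2 i) :
    e ∈ faceEdges (Q.1.erase i, Q.2 + Pi.single i 1) := by
  obtain ⟨a, ha, α, hα, rfl⟩ := mem_fe.1 hf
  obtain ⟨b, hb, β, hβ, rfl⟩ := mem_fe.1 he
  simp only [mem_erase] at hb
  obtain ⟨hba, hb⟩ := hb
  simp only [Pi.add_apply] at h
  by_cases hia : i = a
  · subst hia
    simp [Pi.single_apply, hba.symm] at h
    have : α = 1 := by omega
    subst this
    exact he
  · by_cases hib : i = b
    · subst hib
      simp [Pi.single_apply, hba] at h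
      have : β = 1 := by omega
      subst this
      refine mem_fe.2 ⟨a, by simp [ha, hba.symm], α, hα, ?_⟩
      simp only [erase_right_comm, Prod.mk.injEq, true_and]
      abel
    · simp [hia, hib] at h

theorem face_top {Q f : Face d} {i : Fin d} (hf : f ∈ faceEdges Q)
    (h : Q.2 i + 1 ≤ f.2 i) : f = (Q.1.erase i, Q.2 + Pi.single i 1) := by
  obtain ⟨a, ha, α, hα, rfl⟩ := mem_fe.1 hf
  simp only [Pi.add_apply] at h
  by_cases hia : i = a
  · subst hia
    simp at h
    have : α = 1 := by omega
    rw [this]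
  · simp [hia] at h

theorem face_ge {Q f : Face d} (hf : f ∈ faceEdges Q) : Q.2 ≤ f.2 := by
  obtain ⟨a, ha, α, hα, rfl⟩ := mem_fe.1 hf
  simp only [le_add_iff_nonneg_right, Pi.single_nonneg]
  omega

/-- adjacency inside `M` -/
def R (M : Finset (Face d)) (a b : Face d) : Prop := a ∈ M ∧ b ∈ M ∧ FaceAdj a b

theorem R_symm {M : Finset (Face d)} {a b : Face d} (h : R M a b) : R M b a :=
  ⟨h.2.1, h.1, h.2.2.1.symm, by obtain ⟨e, h1, h2⟩ := h.2.2.2; exact ⟨e, h2, h1⟩⟩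

theorem RR_symm {M : Finset (Face d)} {a b : Face d} (h : Relation.ReflTransGen (R M) a b) :
    Relation.ReflTransGen (R M) b a := by
  induction h with
  | refl => exact .refl
  | tail _ h ih => exact .head (R_symm h) ih

/-- everything in the cube boundary but the top face `F` is joined to the bottom face -/
theorem cube_conn {Q f : Face d} {i : Fin d} {M : Finset (Face d)} (hi : i ∈ Q.1)
    (hM : ∀ g ∈ faceEdges Q, g ≠ (Q.1.erase i, Q.2 + Pi.single i 1) → g ∈ M)
    (hf : f ∈ faceEdges Q) (hne : f ≠ (Q.1.erase i, Q.2 + Pi.single i 1)) :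
    Relation.ReflTransGen (R M) f (Q.1.erase i, Q.2) := by
  have hb : ((Q.1.erase i, Q.2) : Face d) ∈ faceEdges Q := mem_fe.2 ⟨i, hi, 0, Or.inl rfl, by simp⟩
  have hb' : ((Q.1.erase i, Q.2) : Face d) ≠ (Q.1.erase i, Q.2 + Pi.single i 1) := by
    intro h
    have := congrFun (congrArg Prod.snd h) i
    simp at this
  by_cases hfe : f = (Q.1.erase i, Q.2)
  · rw [hfe]
  apply Relation.ReflTransGen.single
  refine ⟨hM f hf hne, hM _ hb hb', hfe, ?_⟩
  obtain ⟨a, ha, α, hα, rfl⟩ := mem_fe.1 hf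
  have hai : a ≠ i := by
    rintro rfl
    rcases hα with rfl | rfl
    · simp at hfe
    · simp at hne
  refine ⟨((Q.1.erase a).erase i, Q.2 + Pi.single a α), mem_fe.2 ⟨i, by simp [hai.symm, hi], 0, Or.inl rfl, by simp⟩, mem_fe.2 ⟨a, by simp [hai, ha], α, hα, ?_⟩⟩
  simp [erase_right_comm]

structure Inv (k N : ℕ) (Q : Face d) (M : Finset (Face d)) : Prop where
  card : M.card = 2 * k * (N + 1) + 2
  kc : ∀ f ∈ M, f.1.card = k
  ge : ∀ f ∈ M, Q.2 ≤ f.2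
  low : ∀ a ∈ Q.1, (Q.1.erase a, Q.2) ∈ M
  low' : ∀ f ∈ M, f.2 = Q.2 → f.1 ⊆ Q.1
  conn : ∃ c, ∀ f ∈ M, Relation.ReflTransGen (R M) f c
  edge : ∀ e, cnt M e = 0 ∨ cnt M e = 2

theorem fe_kc {k : ℕ} {Q f : Face d} (hQ : Q.1.card = k + 1) (hf : f ∈ faceEdges Q) :
    f.1.card = k := by
  obtain ⟨a, ha, α, hα, rfl⟩ := mem_fe.1 hf
  simp [card_erase_of_mem ha, hQ]

theorem fe_sub {Q f : Face d} (hf : f ∈ faceEdges Q) : f.1 ⊆ Q.1 := by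
  obtain ⟨a, ha, α, hα, rfl⟩ := mem_fe.1 hf
  exact erase_subset _ _

theorem low_mem {Q : Face d} {a : Fin d} (ha : a ∈ Q.1) :
    ((Q.1.erase a, Q.2) : Face d) ∈ faceEdges Q := mem_fe.2 ⟨a, ha, 0, Or.inl rfl, by simp⟩

theorem inv_zero {k : ℕ} (hk : 1 ≤ k) {Q : Face d} (hQ : Q.1.card = k + 1) :
    Inv k 0 Q (faceEdges Q) where
  card := by rw [card_fe, hQ]; ring
  kc := fun f hf => fe_kc hQ hf
  ge := fun f hf => face_ge hf
  low := fun a ha => low_mem ha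
  low' := fun f hf _ => fe_sub hf
  edge := cnt_cube Q
  conn := by
    obtain ⟨i, hi, j, hj, hij⟩ := one_lt_card.1 (show 1 < Q.1.card by omega)
    refine ⟨(Q.1.erase i, Q.2), fun f hf => ?_⟩
    by_cases hne : f = (Q.1.erase i, Q.2 + Pi.single i 1)
    · have h1 := cube_conn (M := faceEdges Q) (f := f) hj (fun g hg _ => hg) hf (by
        rw [hne]; intro h; exact hij (erase_inj' hi (congrArg Prod.fst h)))
      have h2 := cube_conn (M := faceEdges Q) hi (fun g hg _ => hg) (low_mem hj) (by
        intro h; exact hij.symm (erase_inj' hj (congrArg Prod.fst h)))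
      exact h1.trans h2
    · exact cube_conn hi (fun g hg _ => hg) hf hne

theorem card_sd {α : Type*} [DecidableEq α] (s t : Finset α) :
    (symmDiff s t).card + 2 * (s ∩ t).card = s.card + t.card := by
  have h1 : (symmDiff s t).card = (s \ t).card + (t \ s).card := by
    rw [symmDiff_def, sup_eq_union, card_union_of_disjoint]
    exact disjoint_sdiff_sdiff
  have h2 := card_sdiff_add_card_inter s t
  have h3 := card_sdiff_add_card_inter t s
  rw [inter_comm] at h3
  omega

theorem inv_succ {k N : ℕ} (hk : 1 ≤ k) {Q : Face d} (hQ : Q.1.card = k + 1) {i j : Fin d}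
    (hi : i ∈ Q.1) (hj : j ∉ Q.1.erase i) {M' : Finset (Face d)}
    (h : Inv k N (insert j (Q.1.erase i), Q.2 + Pi.single i 1) M') :
    Inv k (N + 1) Q (symmDiff (faceEdges Q) M') := by
  set F : Face d := (Q.1.erase i, Q.2 + Pi.single i 1) with hF
  have hFQ : F ∈ faceEdges Q := mem_fe.2 ⟨i, hi, 1, Or.inr rfl, rfl⟩
  have hFM : F ∈ M' := by
    have := h.low j (by simp)
    simpa [erase_insert hj] using this
  have hM'i : ∀ f ∈ M', Q.2 i + 1 ≤ f.2 i := by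
    intro f hf
    have := h.ge f hf i
    simpa using this
  have hcap : faceEdges Q ∩ M' = {F} := by
    ext f
    simp only [mem_inter, mem_singleton]
    constructor
    · rintro ⟨h1, h2⟩
      exact face_top h1 (hM'i f h2)
    · rintro rfl
      exact ⟨hFQ, hFM⟩
  have hsd : ∀ f, f ∈ symmDiff (faceEdges Q) M' ↔ f ≠ F ∧ (f ∈ faceEdges Q ∨ f ∈ M') := by
    intro f
    have : f ∈ faceEdges Q ∩ M' ↔ f = F := by rw [hcap]; simp
    rw [mem_inter] at this
    rw [mem_symmDiff]
    tauto
  have hlow : ∀ f ∈ M', f.2 ≠ Q.2 := by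
    intro f hf h'
    have := hM'i f hf
    rw [h'] at this
    omega
  constructor
  · have := card_sd (faceEdges Q) M'
    rw [hcap, card_fe, hQ, h.card] at this
    simp at this
    linarith
  · intro f hf
    rcases ((hsd f).1 hf).2 with h' | h'
    · exact fe_kc hQ h'
    · exact h.kc f h'
  · intro f hf
    rcases ((hsd f).1 hf).2 with h' | h'
    · exact face_ge h'
    · refine le_trans ?_ (h.ge f h')
      simp
  · intro a ha
    rw [mem_symmDiff]
    exact Or.inl ⟨low_mem ha, fun h' => hlow _ h' rfl⟩
  · intro f hf hf2
    rcases ((hsd f).1 hf).2 with h' | h'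
    · exact fe_sub h'
    · exact absurd hf2 (hlow f h')
  · obtain ⟨c, hc⟩ := h.conn
    refine ⟨(Q.1.erase i, Q.2), ?_⟩
    have hcube : ∀ f ∈ faceEdges Q, f ≠ F →
        Relation.ReflTransGen (R (symmDiff (faceEdges Q) M')) f (Q.1.erase i, Q.2) := by
      intro f hf hne
      exact cube_conn hi (fun g hg hgne => (hsd g).2 ⟨hgne, Or.inl hg⟩) hf hne
    have key : ∀ f, Relation.ReflTransGen (R M') f F → f = F ∨
        Relation.ReflTransGen (R (symmDiff (faceEdges Q) M')) f (Q.1.erase i, Q.2) := by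
      intro f hf
      induction hf using Relation.ReflTransGen.head_induction_on with
      | refl => exact Or.inl rfl
      | @head a b hab _ ih =>
        by_cases haF : a = F
        · exact Or.inl haF
        right
        have haS : a ∈ symmDiff (faceEdges Q) M' := (hsd a).2 ⟨haF, Or.inr hab.1⟩
        by_cases hbF : b = F
        · subst hbF
          obtain ⟨e, hea, heF⟩ := hab.2.2.2
          have h2 : cnt (faceEdges Q) e = 2 := by
            rcases cnt_cube Q e with h0 | h0
            · unfold cnt at h0
              rw [card_eq_zero, filter_eq_empty_iff] at h0
              exact absurd heF (h0 hFQ)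
            · exact h0
          obtain ⟨g, hg, hgF⟩ := exists_mem_ne (show 1 < _ from h2 ▸ one_lt_two) F
          rw [mem_filter] at hg
          refine Relation.ReflTransGen.head ⟨haS, (hsd g).2 ⟨hgF, Or.inl hg.1⟩, ?_, e, hea, hg.2⟩
            (hcube g hg.1 hgF)
          rintro rfl
          have : a ∈ faceEdges Q ∩ M' := mem_inter.2 ⟨hg.1, hab.1⟩
          rw [hcap, mem_singleton] at this
          exact haF this
        · refine Relation.ReflTransGen.head ⟨haS, (hsd b).2 ⟨hbF, Or.inr hab.2.1⟩, hab.2.2⟩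
            (ih.resolve_left hbF)
    intro f hf
    obtain ⟨hne, h' | h'⟩ := (hsd f).1 hf
    · exact hcube f h' hne
    · exact (key f ((hc f h').trans (RR_symm (hc F hFM)))).resolve_left hne
  · intro e
    have h1 := card_sd ((faceEdges Q).filter fun f => e ∈ faceEdges f)
      (M'.filter fun f => e ∈ faceEdges f)
    have h2 : symmDiff ((faceEdges Q).filter fun f => e ∈ faceEdges f)
      (M'.filter fun f => e ∈ faceEdges f) =
        (symmDiff (faceEdges Q) M').filter fun f => e ∈ faceEdges f := by
      ext f; simp only [mem_symmDiff, mem_filter]; tauto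
    have h3 : ((faceEdges Q).filter fun f => e ∈ faceEdges f) ∩
      (M'.filter fun f => e ∈ faceEdges f) =
        ({F} : Finset (Face d)).filter fun f => e ∈ faceEdges f := by
      rw [← hcap]; ext f; simp only [mem_inter, mem_filter]; tauto
    rw [h2, h3] at h1
    change cnt _ e + _ = cnt _ e + cnt _ e at h1
    have hc1 := cnt_cube Q e
    have hc2 := h.edge e
    by_cases heF : e ∈ faceEdges F
    · have h4 : (({F} : Finset (Face d)).filter fun f => e ∈ faceEdges f) = {F} := by
        rw [filter_eq_self]; simpa using heF
      rw [h4, card_singleton] at h1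
      have p1 : cnt (faceEdges Q) e ≠ 0 := by
        unfold cnt; rw [card_ne_zero]; exact ⟨F, mem_filter.2 ⟨hFQ, heF⟩⟩
      have p2 : cnt M' e ≠ 0 := by
        unfold cnt; rw [card_ne_zero]; exact ⟨F, mem_filter.2 ⟨hFM, heF⟩⟩
      omega
    · have h4 : (({F} : Finset (Face d)).filter fun f => e ∈ faceEdges f) = ∅ := by
        rw [filter_eq_empty_iff]; simpa using heF
      rw [h4, card_empty] at h1
      have : cnt (faceEdges Q) e = 0 ∨ cnt M' e = 0 := by
        by_contra hcon
        push Not at hcon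
        unfold cnt at hcon
        rw [card_ne_zero, card_ne_zero] at hcon
        obtain ⟨⟨f, hf⟩, ⟨g, hg⟩⟩ := hcon
        rw [mem_filter] at hf hg
        exact heF (edge_top hf.1 hf.2 ((hM'i g hg.1).trans (face_ge hg.2 i)))
      omega

/-- possible next cubes -/
def nxt (Q : Face d) : Finset (Face d) :=
  Q.1.biUnion fun i => (univ \ Q.1.erase i).image fun j =>
    (insert j (Q.1.erase i), Q.2 + Pi.single i 1)

theorem card_nxt {k : ℕ} {Q : Face d} (hQ : Q.1.card = k + 1) :
    (nxt Q).card = (k + 1) * (d - k) := by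
  unfold nxt
  rw [card_biUnion]
  · rw [sum_congr rfl (g := fun _ => d - k)]
    · simp [hQ]
    · intro i hi
      rw [card_image_of_injOn]
      · rw [card_sdiff_of_subset (subset_univ _), card_erase_of_mem hi, hQ]
        simp
      · intro a ha b hb hab
        simp only [coe_sdiff, Set.mem_sdiff, mem_coe] at ha hb
        have h1 : insert a (Q.1.erase i) = insert b (Q.1.erase i) := congrArg Prod.fst hab
        have : a ∈ insert b (Q.1.erase i) := h1 ▸ mem_insert_self _ _
        exact (mem_insert.1 this).resolve_right ha.2
  · intro a ha b hb hab
    refine disjoint_left.2 ?_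
    intro x hx hy
    simp only [mem_image] at hx hy
    obtain ⟨j, _, rfl⟩ := hx
    obtain ⟨j', _, h⟩ := hy
    have := congrFun (congrArg Prod.snd h) a
    simp [Pi.single_apply, hab] at this

/-- surfaces of directed chains of `N+1` cubes starting at `Q` -/
def surf : ℕ → Face d → Finset (Finset (Face d))
  | 0, Q => {faceEdges Q}
  | N + 1, Q => (nxt Q).biUnion fun Q' => (surf N Q').image fun M => symmDiff (faceEdges Q) M

theorem nxt_card {k : ℕ} {Q Q' : Face d} (hQ : Q.1.card = k + 1) (h : Q' ∈ nxt Q) :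
    Q'.1.card = k + 1 := by
  simp only [nxt, mem_biUnion, mem_image] at h
  obtain ⟨i, hi, j, hj, rfl⟩ := h
  rw [Finset.mem_sdiff] at hj
  simp only
  rw [card_insert_of_notMem hj.2, card_erase_of_mem hi, hQ]; rfl

theorem surf_inv {k : ℕ} (hk : 1 ≤ k) : ∀ (N : ℕ) {Q : Face d}, Q.1.card = k + 1 →
    ∀ M ∈ surf N Q, Inv k N Q M
  | 0, Q, hQ, M, hM => by
    simp only [surf, mem_singleton] at hM
    subst hM
    exact inv_zero hk hQ
  | N + 1, Q, hQ, M, hM => by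
    simp only [surf, mem_biUnion, mem_image] at hM
    obtain ⟨Q', hQ', M', hM', rfl⟩ := hM
    have ih := surf_inv hk N (nxt_card hQ hQ') M' hM'
    simp only [nxt, mem_biUnion, mem_image] at hQ'
    obtain ⟨i, hi, j, hj, rfl⟩ := hQ'
    rw [Finset.mem_sdiff] at hj
    exact inv_succ hk hQ hi hj.2 ih

theorem Inv.base {k N N' : ℕ} {Q Q' : Face d} {M : Finset (Face d)}
    (hQ : Q.1.card = k + 1) (hQ' : Q'.1.card = k + 1)
    (h : Inv k N Q M) (h' : Inv k N' Q' M) : Q.2 = Q'.2 := by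
  obtain ⟨a, ha⟩ := card_pos.1 (show 0 < Q.1.card by omega)
  obtain ⟨a', ha'⟩ := card_pos.1 (show 0 < Q'.1.card by omega)
  have h1 := h.ge _ (h'.low a' ha')
  have h2 := h'.ge _ (h.low a ha)
  exact le_antisymm h1 h2

theorem Inv.sub {k N N' : ℕ} (hk : 1 ≤ k) {Q Q' : Face d} {M : Finset (Face d)}
    (hQ : Q.1.card = k + 1) (hQ' : Q'.1.card = k + 1)
    (h : Inv k N Q M) (h' : Inv k N' Q' M) : Q.1 ⊆ Q'.1 := by
  intro a ha
  obtain ⟨b, hb, hba⟩ := exists_mem_ne (show 1 < Q.1.card by omega) a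
  have hb' := h.base hQ hQ' h'
  have := h'.low' _ (h.low b hb) hb'
  exact this (mem_erase.2 ⟨hba.symm, ha⟩)

theorem Inv.uniq {k N N' : ℕ} (hk : 1 ≤ k) {Q Q' : Face d} {M : Finset (Face d)}
    (hQ : Q.1.card = k + 1) (hQ' : Q'.1.card = k + 1)
    (h : Inv k N Q M) (h' : Inv k N' Q' M) : Q = Q' :=
  Prod.ext (subset_antisymm (h.sub hk hQ hQ' h') (h'.sub hk hQ' hQ h)) (h.base hQ hQ' h')

theorem card_surf {k : ℕ} (hk : 1 ≤ k) : ∀ (N : ℕ) {Q : Face d}, Q.1.card = k + 1 →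
    (surf N Q).card = ((k + 1) * (d - k)) ^ N
  | 0, Q, hQ => by simp [surf]
  | N + 1, Q, hQ => by
    rw [surf, card_biUnion]
    · rw [sum_congr rfl (g := fun _ => ((k + 1) * (d - k)) ^ N)]
      · rw [sum_const, card_nxt hQ, smul_eq_mul, pow_succ, mul_comm]
      · intro Q' hQ'
        rw [card_image_of_injective _ (symmDiff_right_injective _)]
        exact card_surf hk N (nxt_card hQ hQ')
    · intro Q1 h1 Q2 h2 hne
      refine disjoint_left.2 ?_
      intro M hM1 hM2
      simp only [mem_image] at hM1 hM2
      obtain ⟨M1, hM1, rfl⟩ := hM1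
      obtain ⟨M2, hM2, h⟩ := hM2
      have := symmDiff_right_injective _ h
      subst this
      exact hne ((surf_inv hk N (nxt_card hQ h1) _ hM1).uniq hk (nxt_card hQ h1) (nxt_card hQ h2)
        (surf_inv hk N (nxt_card hQ h2) _ hM2))

theorem Inv.closed {k N : ℕ} {Q : Face d} {M : Finset (Face d)} (h : Inv k N Q M) :
    IsClosedSAM d k (2 * k * (N + 1) + 2) M := by
  obtain ⟨c, hc⟩ := h.conn
  refine ⟨⟨h.card, h.kc, fun f hf g hg => (hc f hf).trans (RR_symm (hc g hg)), fun e => ?_⟩, ?_⟩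
  · have := h.edge e
    unfold cnt at this
    omega
  · intro f hf e he
    refine (h.edge e).resolve_left ?_
    unfold cnt
    refine card_ne_zero.2 ?_
    exact ⟨f, mem_filter.2 ⟨hf, he⟩⟩

theorem translate_comp (s t : Fin d → ℤ) (A : Finset (Face d)) :
    (A.image (translateFace s)).image (translateFace t) = A.image (translateFace (s + t)) := by
  rw [image_image]
  congr 1
  funext f
  simp [translateFace, add_assoc]

theorem translate_zero (A : Finset (Face d)) : A.image (translateFace 0) = A := by
  have : (translateFace 0 : Face d → Face d) = id := by
    funext f; simp [translateFace]
  rw [this, image_id]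

theorem te_equiv : Equivalence (TransEquiv (d := d)) where
  refl A := ⟨0, translate_zero A⟩
  symm := by
    rintro A B ⟨t, rfl⟩
    exact ⟨-t, by rw [translate_comp]; simp [translate_zero]⟩
  trans := by
    rintro A B C ⟨t, rfl⟩ ⟨s, rfl⟩
    exact ⟨t + s, by rw [translate_comp]⟩

theorem te_eq {k N : ℕ} {Q : Face d} {A B : Finset (Face d)} (hQ : Q.1.card = k + 1)
    (hA : Inv k N Q A) (hB : Inv k N Q B) (h : TransEquiv A B) : A = B := by
  obtain ⟨t, rfl⟩ := h
  obtain ⟨a, ha⟩ := card_pos.1 (show 0 < Q.1.card by omega)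
  have h1 : 0 ≤ t := by
    have := hB.ge _ (mem_image_of_mem (translateFace t) (hA.low a ha))
    simpa [translateFace] using this
  have h2 : t ≤ 0 := by
    have := hB.low a ha
    rw [mem_image] at this
    obtain ⟨f, hf, hft⟩ := this
    have h3 := hA.ge f hf
    have h4 : f.2 + t = Q.2 := congrArg Prod.snd hft
    rw [← h4] at h3
    simpa using h3
  have : t = 0 := le_antisymm h2 h1
  subst this
  rw [translate_zero]

theorem quot_exact {P : Finset (Face d) → Prop} {A B : {M : Finset (Face d) // P M}}
    (h : Quot.mk (fun A B : {M : Finset (Face d) // P M} => TransEquiv A.val B.val) A =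
      Quot.mk _ B) : TransEquiv A.val B.val := by
  have h1 := Quot.eqvGen_exact h
  have he : Equivalence (fun A B : {M : Finset (Face d) // P M} => TransEquiv A.val B.val) :=
    ⟨fun _ => te_equiv.refl _, fun h => te_equiv.symm h, fun h h' => te_equiv.trans h h'⟩
  exact he.eqvGen_iff.1 h1

theorem lower (d k N : ℕ) (hk : 1 ≤ k) (hkd : k < d)
    (hfin : Finite (Quot fun A B :
      {M : Finset (Face d) // IsClosedSAM d k (2 * k * (N + 1) + 2) M} =>
        TransEquiv A.val B.val)) :
    ((k + 1) * (d - k)) ^ N ≤ closedSamCount d k (2 * k * (N + 1) + 2) := by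
  obtain ⟨T, -, hT⟩ := exists_subset_card_eq (s := (univ : Finset (Fin d))) (n := k + 1)
    (by simpa using hkd)
  let Q : Face d := (T, 0)
  have hQ : Q.1.card = k + 1 := hT
  rw [← card_surf hk N hQ, ← Nat.card_eq_finsetCard]
  unfold closedSamCount
  refine Nat.card_le_card_of_injective
    (fun M : {x // x ∈ surf N Q} => Quot.mk _ ⟨M.1, (surf_inv hk N hQ M.1 M.2).closed⟩) ?_
  intro A B hAB
  have := quot_exact hAB
  exact Subtype.ext (te_eq hQ (surf_inv hk N hQ A.1 A.2) (surf_inv hk N hQ B.1 B.2) this)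

end SamAux

namespace SamAux
open Finset

variable {d : ℕ}

/-- faces with base points at sup-distance at most one -/
def nb (a : Face d) : Finset (Face d) :=
  (univ : Finset (Finset (Fin d) × (Fin d → Fin 3))).image
    fun p => (p.1, fun i => a.2 i + ((p.2 i : ℕ) : ℤ) - 1)

/-- size bound -/
def DD (d : ℕ) : ℕ := 2 ^ d * 3 ^ d

theorem card_nb (a : Face d) : (nb a).card ≤ DD d := by
  refine card_image_le.trans ?_
  simp [DD]

theorem mem_nb {a b : Face d} (h : ∀ i, |b.2 i - a.2 i| ≤ 1) : b ∈ nb a := by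
  unfold nb
  rw [mem_image]
  refine ⟨(b.1, fun i => ⟨(b.2 i - a.2 i + 1).toNat, ?_⟩), mem_univ _, ?_⟩
  · have := abs_le.1 (h i); omega
  · refine Prod.ext rfl ?_
    funext i
    have := abs_le.1 (h i)
    simp only
    omega

/-- vertex sets of walks -/
def W : ℕ → Face d → Finset (Finset (Face d))
  | 0, a => {{a}}
  | L + 1, a => (nb a).biUnion fun b => (W L b).image (insert a)

theorem card_W : ∀ (L : ℕ) (a : Face d), (W L a).card ≤ DD d ^ L
  | 0, a => by simp [W]
  | L + 1, a => by
    rw [W]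
    refine card_biUnion_le.trans ?_
    refine (sum_le_card_nsmul _ _ (DD d ^ L) fun b _ => card_image_le.trans (card_W L b)).trans ?_
    rw [smul_eq_mul, pow_succ, mul_comm]
    exact Nat.mul_le_mul_left _ (card_nb a)

/-- nearness -/
def near (a b : Face d) : Prop := ∀ i, |b.2 i - a.2 i| ≤ 1

theorem mem_W : ∀ (l : List (Face d)) (a : Face d), List.IsChain near (a :: l) →
    (a :: l).toFinset ∈ W l.length a
  | [], a, _ => by simp [W]
  | b :: l, a, h => by
    rw [List.isChain_cons_cons] at h
    simp only [List.length_cons, W, mem_biUnion, mem_image]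
    refine ⟨b, mem_nb h.1, _, mem_W l b h.2, ?_⟩
    simp

theorem near_of_adj {a b : Face d} (h : FaceAdj a b) : near a b := by
  obtain ⟨_, e, h1, h2⟩ := h
  obtain ⟨x, hx, α, hα, rfl⟩ := mem_fe.1 h1
  obtain ⟨y, hy, β, hβ, he⟩ := mem_fe.1 h2
  intro i
  have := congrFun (congrArg Prod.snd he) i
  simp only [Pi.add_apply, Pi.single_apply] at this
  rw [abs_le]
  split_ifs at this <;> omega

theorem near_symm {a b : Face d} (h : near a b) : near b a := by
  intro i; rw [abs_sub_comm]; exact h i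

theorem exists_walk {n : ℕ} {M : Finset (Face d)} (hc : ConnectedFaces M) (hn : M.card = n + 1)
    {f : Face d} (hf : f ∈ M) : ∃ l : List (Face d), l.length = 2 * n ∧
      List.IsChain near (f :: l) ∧ (f :: l).toFinset = M := by
  have key : ∀ m ≤ n, ∃ l : List (Face d), l.length = 2 * m ∧
      List.IsChain near (f :: l) ∧ (f :: l).toFinset ⊆ M ∧ (f :: l).toFinset.card = m + 1 := by
    intro m
    induction m with
    | zero => intro _; exact ⟨[], by simp [hf]⟩
    | succ m ih =>
      intro hm
      obtain ⟨l, hl, hch, hsub, hcard⟩ := ih (by omega)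
      obtain ⟨g, hgM, hg⟩ := exists_mem_notMem_of_card_lt_card
        (show (f :: l).toFinset.card < M.card by omega)
      have : ∃ a b, a ∈ (f :: l) ∧ b ∉ (f :: l) ∧ b ∈ M ∧ near a b := by
        by_contra hcon
        push Not at hcon
        apply hg
        have hp := hc f hf g hgM
        clear hgM hg
        induction hp with
        | refl => simp
        | @tail b c _ hbc ih2 =>
          by_contra hh
          rw [List.mem_toFinset] at ih2 hh
          exact hcon b c ih2 hh hbc.2.1 (near_of_adj hbc.2.2)
      obtain ⟨a, b, ha, hb, hbM, hab⟩ := this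
      obtain ⟨s, t, hst⟩ := List.append_of_mem ha
      have hl' : (f :: l).length = (s ++ a :: t).length := by rw [hst]
      have hnew : List.IsChain near (s ++ a :: b :: a :: t) := by
        rw [hst] at hch
        rw [List.isChain_split] at hch ⊢
        refine ⟨hch.1, ?_⟩
        rw [List.isChain_cons_cons, List.isChain_cons_cons]
        exact ⟨hab, near_symm hab, hch.2⟩
      have hset : (s ++ a :: b :: a :: t).toFinset = insert b (f :: l).toFinset := by
        rw [hst]; ext x; simp only [List.mem_toFinset, List.mem_append, List.mem_cons, mem_insert]; tauto
      have hhead : ∃ l', s ++ a :: b :: a :: t = f :: l' := by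
        cases s with
        | nil =>
          simp only [List.nil_append, List.cons.injEq] at hst
          exact ⟨b :: a :: t, by simp [hst.1]⟩
        | cons x s =>
          simp only [List.cons_append, List.cons.injEq] at hst
          exact ⟨s ++ a :: b :: a :: t, by simp [hst.1]⟩
      obtain ⟨l', hl''⟩ := hhead
      rw [hl''] at hnew hset
      refine ⟨l', ?_, hnew, ?_, ?_⟩
      · have := congrArg List.length hl''
        simp at this hl'
        omega
      · rw [hset]
        exact insert_subset hbM hsub
      · rw [hset, card_insert_of_notMem (by rwa [List.mem_toFinset]), hcard]
  obtain ⟨l, h1, h2, h3, h4⟩ := key n le_rfl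
  exact ⟨l, h1, h2, eq_of_subset_of_card_le h3 (by omega)⟩

/-- the normalised representatives -/
def PP (d n : ℕ) : Finset (Finset (Face d)) :=
  (univ : Finset (Finset (Fin d))).biUnion fun S => W (2 * n) (S, 0)

theorem card_PP (n : ℕ) : (PP d n).card ≤ 2 ^ d * DD d ^ (2 * n) := by
  refine card_biUnion_le.trans ?_
  refine (sum_le_card_nsmul _ _ (DD d ^ (2 * n)) fun b _ => card_W _ _).trans ?_
  simp

theorem mem_PP {n : ℕ} {M : Finset (Face d)} (hc : ConnectedFaces M) (hn : M.card = n + 1)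
    {f : Face d} (hf : f ∈ M) : M.image (translateFace (-f.2)) ∈ PP d n := by
  obtain ⟨l, h1, h2, h3⟩ := exists_walk hc hn hf
  unfold PP
  rw [mem_biUnion]
  refine ⟨f.1, mem_univ _, ?_⟩
  have h4 : List.IsChain near ((f.1, 0) :: l.map (translateFace (-f.2))) := by
    have : ((f.1, 0) : Face d) = translateFace (-f.2) f := by simp [translateFace]
    rw [this, ← List.map_cons, List.isChain_map]
    refine h2.imp ?_
    intro a b hab i
    have := hab i
    simpa [translateFace] using this
  have h5 := mem_W _ _ h4
  rw [List.length_map, h1] at h5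
  convert h5 using 1
  rw [← h3]
  ext x
  simp [translateFace]

theorem upper (d k n : ℕ) :
    Finite (Quot fun A B : {M : Finset (Face d) // IsClosedSAM d k (n + 1) M} =>
        TransEquiv A.val B.val) ∧
    closedSamCount d k (n + 1) ≤ 2 ^ d * DD d ^ (2 * n) := by
  have hne : ∀ A : {M : Finset (Face d) // IsClosedSAM d k (n + 1) M}, ∃ f, f ∈ A.1 := by
    intro A
    have := A.2.1.1
    exact card_pos.1 (by omega)
  choose r hr using hne
  let φ : (Quot fun A B : {M : Finset (Face d) // IsClosedSAM d k (n + 1) M} =>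
        TransEquiv A.val B.val) → {x // x ∈ PP d n} := fun q =>
    ⟨_, mem_PP q.out.2.1.2.2.1 q.out.2.1.1 (hr q.out)⟩
  have hφ : Function.Injective φ := by
    intro p q h
    have h1 := congrArg Subtype.val h
    simp only [φ] at h1
    rw [← Quot.out_eq p, ← Quot.out_eq q]
    apply Quot.sound
    exact te_equiv.trans ⟨_, h1⟩ (te_equiv.symm ⟨_, rfl⟩)
  refine ⟨Finite.of_injective φ hφ, ?_⟩
  refine (Nat.card_le_card_of_injective φ hφ).trans ?_
  rw [Nat.card_eq_finsetCard]
  exact card_PP n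

end SamAux

theorem closedSamCount_limsup_lower_bound (d k : ℕ) (hk : 1 ≤ k) (hkd : k < d) :
    (((k + 1) * (d - k) : ℕ) : ℝ) ^ (1 / (2 * (k : ℝ))) ≤
      limsup (fun n : ℕ => (closedSamCount d k n : ℝ) ^ (1 / (n : ℝ))) atTop := by
  set C : ℕ := (k + 1) * (d - k) with hC
  have hC1 : 1 ≤ C := Nat.mul_pos (by omega) (by omega)
  have hC0 : (0 : ℝ) < C := by exact_mod_cast hC1
  have hk0 : (0 : ℝ) < k := by exact_mod_cast hk
  -- upper bound
  have hbdd : IsBoundedUnder (· ≤ ·) atTop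
      (fun n : ℕ => (closedSamCount d k n : ℝ) ^ (1 / (n : ℝ))) := by
    refine ⟨((2 ^ d * SamAux.DD d ^ 2 : ℕ) : ℝ), ?_⟩
    rw [eventually_map]
    filter_upwards [eventually_ge_atTop 1] with n hn
    obtain ⟨m, rfl⟩ : ∃ m, n = m + 1 := ⟨n - 1, by omega⟩
    have h1 := (SamAux.upper d k m).2
    have hD : 1 ≤ SamAux.DD d := Nat.mul_pos (by positivity) (by positivity)
    have h2 : closedSamCount d k (m + 1) ≤ (2 ^ d * SamAux.DD d ^ 2) ^ (m + 1) := by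
      refine h1.trans ?_
      rw [mul_pow, ← pow_mul (SamAux.DD d)]
      refine Nat.mul_le_mul ?_ ?_
      · exact Nat.le_self_pow (by omega) _
      · exact Nat.pow_le_pow_right hD (by omega)
    have h3 : (closedSamCount d k (m + 1) : ℝ) ≤ ((2 ^ d * SamAux.DD d ^ 2 : ℕ) : ℝ) ^ (m + 1) := by
      exact_mod_cast h2
    calc _ ≤ (((2 ^ d * SamAux.DD d ^ 2 : ℕ) : ℝ) ^ (m + 1)) ^ (1 / ((m + 1 : ℕ) : ℝ)) :=
          Real.rpow_le_rpow (by positivity) h3 (by positivity)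
      _ = _ := by
          rw [one_div, Real.pow_rpow_inv_natCast (by positivity) (by omega)]
  -- the subsequence
  have hlim : Tendsto (fun N : ℕ => (C : ℝ) ^ ((N : ℝ) / ((2 * k * (N + 1) + 2 : ℕ) : ℝ))) atTop
      (nhds ((C : ℝ) ^ (1 / (2 * (k : ℝ))))) := by
    refine Tendsto.rpow tendsto_const_nhds ?_ (Or.inl hC0.ne')
    have h1 : Tendsto (fun N : ℕ => 1 / (2 * (k : ℝ) + (2 * k + 2) / (N : ℝ))) atTop
        (nhds (1 / (2 * (k : ℝ) + 0))) := by
      refine Tendsto.div tendsto_const_nhds (tendsto_const_nhds.add ?_) (by positivity)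
      exact tendsto_const_div_atTop_nhds_zero_nat _
    rw [add_zero] at h1
    refine h1.congr' ?_
    filter_upwards [eventually_ge_atTop 1] with N hN
    have : (0 : ℝ) < N := by exact_mod_cast hN
    push_cast
    field_simp
    ring
  have hsub : Tendsto (fun N : ℕ => 2 * k * (N + 1) + 2) atTop atTop := by
    refine tendsto_atTop_mono (fun N => ?_) tendsto_id
    simp only [id]
    nlinarith
  refine le_of_forall_lt fun b hb => ?_
  obtain ⟨b', hb1, hb2⟩ := exists_between hb
  refine lt_of_lt_of_le hb1 ?_
  refine le_limsup_of_frequently_le ?_ hbdd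
  refine hsub.frequently (Eventually.frequently ?_)
  filter_upwards [hlim.eventually (lt_mem_nhds hb2)] with N hN
  refine hN.le.trans ?_
  have h1 := SamAux.lower d k N hk hkd (SamAux.upper d k (2 * k * (N + 1) + 1)).1
  have h2 : (C : ℝ) ^ N ≤ closedSamCount d k (2 * k * (N + 1) + 2) := by exact_mod_cast h1
  calc _ = ((C : ℝ) ^ N) ^ (1 / ((2 * k * (N + 1) + 2 : ℕ) : ℝ)) := by
        rw [← Real.rpow_natCast, ← Real.rpow_mul hC0.le, mul_one_div]
    _ ≤ _ := Real.rpow_le_rpow (by positivity) h2 (by positivity)
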